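/- arXiv:1903.11968 — 2 statements merged into one kernel-verified Lean document; each statement's English description precedes it below -/
import Mathlib

section
/- Let S be a 2^n-periodic binary sequence with L(S) = 2^n, and suppose that 2^n - 2^s < L_1(S) < 2^n - 2^{s-1} for some integer s with 1 ≤ s ≤ n. Then there is exactly one position j with 0 ≤ j < 2^s such that L(S + E_1(j)) = L_1(S). -/
/-- Generating polynomial `S^N(x) = s_0 + s_1 x + ... + s_{N-1} x^{N-1}` of one period
of an `N`-periodic binary sequence. -/
noncomputable def genPoly {N : ℕ} (S : Fin N → ZMod 2) : Polynomial (ZMod 2) :=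
  ∑ i : Fin N, Polynomial.C (S i) * Polynomial.X ^ (i : ℕ)

/-- Linear complexity `L(S) = N - deg (gcd (1 - x^N, S^N(x)))`. -/
noncomputable def linComp {N : ℕ} (S : Fin N → ZMod 2) : ℕ :=
  N - (EuclideanDomain.gcd (1 - Polynomial.X ^ N) (genPoly S)).natDegree

/-- Hamming weight of one period of an `N`-periodic binary sequence. -/
def wt {N : ℕ} (T : Fin N → ZMod 2) : ℕ :=
  (Finset.univ.filter (fun i => T i ≠ 0)).card

/-- `k`-error linear complexity `L_{N,k}(S)`. -/
noncomputable def errLC {N : ℕ} (S : Fin N → ZMod 2) (k : ℕ) : ℕ :=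
  sInf {c | ∃ T : Fin N → ZMod 2, wt T ≤ k ∧ linComp (S + T) = c}

/-- `k`-error linear complexity with a zone of length `Z`: `L_{N,k;Z}(S)`. -/
noncomputable def errLCZone {N : ℕ} (S : Fin N → ZMod 2) (k Z : ℕ) : ℕ :=
  sInf {c | ∃ T : Fin N → ZMod 2, wt T ≤ k ∧ (∀ i : Fin N, Z ≤ (i : ℕ) → T i = 0) ∧
    linComp (S + T) = c}

/-- `E_1(j)`: the sequence whose only nonzero term in one period is a `1` at position `j`. -/
def E1 {N : ℕ} (j : Fin N) : Fin N → ZMod 2 :=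
  fun i => if i = j then 1 else 0

open Polynomial in
theorem aux_prime : Prime (1 - X : (ZMod 2)[X]) := by
  have h := (Polynomial.prime_X_sub_C (1 : ZMod 2)).neg
  simpa using h

open Polynomial in
theorem aux_pow (n : ℕ) : (1 - X ^ (2^n) : (ZMod 2)[X]) = (1 - X) ^ (2^n) := by
  rw [sub_pow_char_pow, one_pow]

open Polynomial in
theorem aux_deg : (1 - X : (ZMod 2)[X]).natDegree = 1 := by
  have h := Polynomial.natDegree_X_sub_C (1 : ZMod 2)
  rw [← Polynomial.natDegree_neg] at h
  simpa using h

open Polynomial in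
theorem aux_linComp {n : ℕ} (S : Fin (2^n) → ZMod 2) (m : ℕ) (hm : m ≤ 2^n) :
    linComp S ≤ 2^n - m ↔ (1 - X : (ZMod 2)[X]) ^ m ∣ genPoly S := by
  have hg := EuclideanDomain.gcd_dvd_left (1 - X ^ (2^n) : (ZMod 2)[X]) (genPoly S)
  have hg' := EuclideanDomain.gcd_dvd_right (1 - X ^ (2^n) : (ZMod 2)[X]) (genPoly S)
  have hd : (1 - X : (ZMod 2)[X]) ^ m ∣ (1 - X ^ (2^n) : (ZMod 2)[X]) := by
    rw [aux_pow]; exact pow_dvd_pow _ hm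
  have key : (1 - X : (ZMod 2)[X]) ^ m ∣ genPoly S ↔
      (1 - X : (ZMod 2)[X]) ^ m ∣ EuclideanDomain.gcd (1 - X ^ (2^n) : (ZMod 2)[X]) (genPoly S) :=
    ⟨fun h => EuclideanDomain.dvd_gcd hd h, fun h => h.trans hg'⟩
  rw [key]
  unfold linComp
  generalize EuclideanDomain.gcd (1 - X ^ (2^n) : (ZMod 2)[X]) (genPoly S) = g at *
  rw [aux_pow] at hg
  obtain ⟨k, hk, hgk⟩ := (dvd_prime_pow aux_prime _).1 hg
  have hdeg : g.natDegree = k := by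
    rw [Polynomial.natDegree_eq_of_degree_eq (Polynomial.degree_eq_degree_of_associated hgk),
      Polynomial.natDegree_pow, aux_deg, mul_one]
  rw [hdeg, hgk.dvd_iff_dvd_right, pow_dvd_pow_iff aux_prime.ne_zero aux_prime.not_isUnit]
  omega

open Polynomial in
theorem aux_gen {N : ℕ} (S : Fin N → ZMod 2) (j : Fin N) :
    genPoly (S + E1 j) = genPoly S + X ^ (j : ℕ) := by
  unfold genPoly E1
  simp [add_mul, Finset.sum_add_distrib]

theorem aux_wt {N : ℕ} (T : Fin N → ZMod 2) (h : wt T ≤ 1) : T = 0 ∨ ∃ j, T = E1 j := by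
  unfold wt at h
  by_cases h0 : T = 0
  · exact Or.inl h0
  right
  obtain ⟨j, hj⟩ : ∃ j, T j ≠ 0 := by
    by_contra! hc
    exact h0 (funext hc)
  refine ⟨j, funext fun i => ?_⟩
  have h01 : ∀ a : ZMod 2, a ≠ 0 → a = 1 := by decide
  unfold E1
  split_ifs with hij
  · subst hij; exact h01 _ hj
  · by_contra hi
    exact hij (Finset.card_le_one.1 h i (by simp [hi]) j (by simp [hj]))

open Polynomial in
theorem aux_mod (q i : ℕ) : (1 - X ^ q : (ZMod 2)[X]) ∣ X ^ i - X ^ (i % q) := by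
  have h : (X : (ZMod 2)[X]) ^ i - X ^ (i % q) = - (X ^ (i % q) * (1 - (X ^ q) ^ (i / q))) := by
    conv_lhs => rw [← Nat.mod_add_div i q, pow_add, pow_mul]
    simp; ring
  rw [h, dvd_neg]
  exact Dvd.dvd.mul_left (by simpa using sub_dvd_pow_sub_pow (1 : (ZMod 2)[X]) (X ^ q) (i / q)) _

open Polynomial in
theorem aux_mod_eq (q i j : ℕ) (hq : 0 < q) (h : (1 - X ^ q : (ZMod 2)[X]) ∣ X ^ i - X ^ j) :
    i % q = j % q := by
  have h3 : (1 - X ^ q : (ZMod 2)[X]) ∣ X ^ (i % q) - X ^ (j % q) := by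
    have := dvd_add (dvd_sub h (aux_mod q i)) (aux_mod q j)
    convert this using 1; ring
  have h4 : (X ^ (i % q) - X ^ (j % q) : (ZMod 2)[X]) = 0 := by
    apply Polynomial.eq_zero_of_dvd_of_degree_lt h3
    have : (1 - X ^ q : (ZMod 2)[X]).degree = q := by
      rw [← Polynomial.degree_neg, neg_sub]
      simpa using Polynomial.degree_X_pow_sub_C hq (1 : ZMod 2)
    rw [this]
    refine (Polynomial.degree_sub_le _ _).trans_lt ?_
    rw [Polynomial.degree_X_pow, Polynomial.degree_X_pow, max_lt_iff]
    exact ⟨by exact_mod_cast Nat.mod_lt _ hq, by exact_mod_cast Nat.mod_lt _ hq⟩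
  have h5 := congrArg Polynomial.natDegree (sub_eq_zero.1 h4)
  simpa using h5

open Polynomial in
theorem aux_uniq (t i j : ℕ) (hij : i ≤ j) (hj : j < 2^(t+1))
    (h : (1 - X : (ZMod 2)[X]) ^ (2^t + 1) ∣ X ^ i - X ^ j) : i = j := by
  have hm := aux_mod_eq (2^t) i j (by positivity)
    (by rw [aux_pow]; exact (pow_dvd_pow _ (Nat.le_succ _)).trans h)
  by_contra hne
  have hjj : j = i + 2^t := by
    obtain ⟨c, hc⟩ := (Nat.modEq_iff_dvd' hij).1 hm
    have hc1 : c = 1 := by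
      have : 2^t * c < 2^t * 2 := by rw [← hc, ← pow_succ]; omega
      have := Nat.lt_of_mul_lt_mul_left this
      have : c ≠ 0 := by rintro rfl; omega
      omega
    subst hc1; omega
  have h6 : (X ^ i - X ^ j : (ZMod 2)[X]) = (1 - X) ^ (2^t) * X ^ i := by
    rw [← aux_pow, hjj]; ring
  rw [h6, pow_succ, mul_dvd_mul_iff_left (pow_ne_zero _ aux_prime.ne_zero)] at h
  have h7 := aux_prime.dvd_of_dvd_pow h
  have h8 : (1 - X : (ZMod 2)[X]) ∣ 1 := by
    have := dvd_add (dvd_refl (1 - X : (ZMod 2)[X])) h7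
    simpa using this
  exact aux_prime.not_isUnit (isUnit_of_dvd_one h8)

theorem aux_errLC_le {N : ℕ} (S : Fin N → ZMod 2) (j : Fin N) :
    errLC S 1 ≤ linComp (S + E1 j) := by
  apply Nat.sInf_le
  refine ⟨E1 j, ?_, rfl⟩
  unfold wt E1
  rw [Finset.card_le_one]
  intro a ha b hb
  simp at ha hb
  rw [ha, hb]

/-- If `L(S) = 2^n` and `2^n - 2^s < L_1(S) < 2^n - 2^{s-1}`, then there is exactly
one position `j` with `0 ≤ j < 2^s` such that `L(S + E_1(j)) = L_1(S)`. -/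
theorem stmt5 (n s : ℕ) (hs1 : 1 ≤ s) (hsn : s ≤ n)
    (S : Fin (2^n) → ZMod 2) (hL : linComp S = 2^n)
    (h1 : 2^n - 2^s < errLC S 1) (h2 : errLC S 1 < 2^n - 2^(s-1)) :
    ∃! j : Fin (2^n), (j : ℕ) < 2^s ∧ linComp (S + E1 j) = errLC S 1 := by
  obtain ⟨t, rfl⟩ : ∃ t, s = t + 1 := ⟨s - 1, by omega⟩
  simp only [Nat.add_sub_cancel] at h2
  have hpow : 2^(t+1) ≤ 2^n := Nat.pow_le_pow_right (by norm_num) hsn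
  have hmem : errLC S 1 ∈ {c | ∃ T : Fin (2^n) → ZMod 2, wt T ≤ 1 ∧ linComp (S + T) = c} :=
    Nat.sInf_mem ⟨_, 0, by simp [wt], rfl⟩
  obtain ⟨T, hT, hTc⟩ := hmem
  have hle := aux_errLC_le S
  generalize errLC S 1 = c at *
  have hcm : c = 2^n - (2^n - c) := by omega
  have hiff : ∀ j : Fin (2^n), linComp (S + E1 j) ≤ c ↔
      (1 - Polynomial.X : Polynomial (ZMod 2)) ^ (2^n - c) ∣
        genPoly S + Polynomial.X ^ (j : ℕ) := by
    intro j
    rw [← aux_gen, ← aux_linComp _ _ (by omega), ← hcm]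
  obtain ⟨i, rfl⟩ : ∃ i, T = E1 i := by
    rcases aux_wt T hT with rfl | h
    · rw [add_zero] at hTc; omega
    · exact h
  have hi := (hiff i).1 hTc.le
  have hlt : (i : ℕ) % 2^(t+1) < 2^(t+1) := Nat.mod_lt _ (by positivity)
  refine ⟨⟨(i : ℕ) % 2^(t+1), by omega⟩, ⟨hlt, le_antisymm ((hiff _).2 ?_) (hle _)⟩, ?_⟩
  · have h3 := aux_mod (2^(t+1)) (i : ℕ)
    rw [aux_pow] at h3
    have h4 := dvd_sub hi ((pow_dvd_pow _ (by omega : 2^n - c ≤ 2^(t+1))).trans h3)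
    convert h4 using 1
    ring
  · rintro j ⟨hj, hjc⟩
    have h3 := aux_mod (2^(t+1)) (i : ℕ)
    rw [aux_pow] at h3
    have h4 := dvd_sub hi ((pow_dvd_pow _ (by omega : 2^n - c ≤ 2^(t+1))).trans h3)
    have h5 := dvd_sub ((hiff j).1 hjc.le) h4
    have h6 : (1 - Polynomial.X : Polynomial (ZMod 2)) ^ (2^t + 1) ∣
        Polynomial.X ^ (j : ℕ) - Polynomial.X ^ ((i : ℕ) % 2^(t+1)) := by
      refine (pow_dvd_pow _ (by omega : 2^t + 1 ≤ 2^n - c)).trans ?_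
      convert h5 using 1
      ring
    apply Fin.ext
    rcases le_total (j : ℕ) ((i : ℕ) % 2^(t+1)) with hh | hh
    · exact aux_uniq t _ _ hh hlt h6
    · exact (aux_uniq t _ _ hh hj (by rw [← dvd_neg, neg_sub]; exact h6)).symm
end

section
/- Let S be any 2^n-periodic binary sequence and let k be a positive integer with k ≤ 2^n (note that L_k(S) < 2^n since k ≥ 1). Set Z = 2^{⌈log_2(2^n - L_k(S))⌉}. Then there exists an integer k' ≤ k with k' ≤ Z such that L_k(S) = L_{k'}(S) = L_{k';Z}(S). -/
open Polynomial in
lemma one_sub_pow2 (m : ℕ) : (1 - X ^ (2^m) : (ZMod 2)[X]) = (1 - X) ^ (2^m) := by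
  rw [sub_pow_char_pow, one_pow]

open Polynomial in
lemma natDegree_one_sub_X_pow (d : ℕ) : ((1 - X : (ZMod 2)[X]) ^ d).natDegree = d := by
  have h : (1 - X : (ZMod 2)[X]) = -(X - C 1) := by simp
  rw [natDegree_pow, h, natDegree_neg, natDegree_X_sub_C, mul_one]

open Polynomial in
lemma one_sub_X_ne : (1 - X : (ZMod 2)[X]) ≠ 0 := by
  intro h
  have := natDegree_one_sub_X_pow 1
  simp [h] at this

open Polynomial in
lemma linComp_le_of_dvd {n d : ℕ} (hd : d ≤ 2^n) (A : Fin (2^n) → ZMod 2)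
    (h : (1 - X) ^ d ∣ genPoly A) : linComp A ≤ 2^n - d := by
  unfold linComp
  have h1 : (1 - X : (ZMod 2)[X]) ^ d ∣ 1 - X ^ (2^n) := by
    rw [one_sub_pow2]; exact pow_dvd_pow _ hd
  have h2 := EuclideanDomain.dvd_gcd h1 h
  have hne : EuclideanDomain.gcd (1 - X ^ (2^n)) (genPoly A) ≠ 0 := by
    intro h0
    have := (EuclideanDomain.gcd_eq_zero_iff.mp h0).1
    rw [one_sub_pow2] at this
    exact pow_ne_zero _ one_sub_X_ne this
  have := natDegree_le_of_dvd h2 hne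
  rw [natDegree_one_sub_X_pow] at this
  omega

open Polynomial in
lemma dvd_of_linComp {n : ℕ} (A : Fin (2^n) → ZMod 2) :
    (1 - X) ^ (2^n - linComp A) ∣ genPoly A := by
  unfold linComp
  have h1 := EuclideanDomain.gcd_dvd_left (1 - X ^ (2^n)) (genPoly A)
  have h2 := EuclideanDomain.gcd_dvd_right (1 - X ^ (2^n)) (genPoly A)
  generalize EuclideanDomain.gcd (1 - X ^ (2^n)) (genPoly A) = g at *
  rw [one_sub_pow2] at h1
  have hp : Prime (1 - X : (ZMod 2)[X]) := by
    have h : (1 - X : (ZMod 2)[X]) = -(X - C 1) := by simp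
    rw [h]; exact (prime_X_sub_C _).neg
  obtain ⟨i, hi, ha⟩ := (dvd_prime_pow hp _).1 h1
  have hdeg : g.natDegree = i := by
    rw [natDegree_eq_of_degree_eq (degree_eq_degree_of_associated ha), natDegree_one_sub_X_pow]
  rw [hdeg, Nat.sub_sub_self hi]
  exact ha.symm.dvd.trans h2

/-- Folding of the error sequence modulo `Z`. -/
def foldSeq {N : ℕ} (Z : ℕ) (T : Fin N → ZMod 2) : Fin N → ZMod 2 :=
  fun i => ∑ j : Fin N, if (j : ℕ) % Z = i then T j else 0

open Polynomial in
lemma genPoly_foldSeq {N : ℕ} (Z : ℕ) (T : Fin N → ZMod 2) :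
    genPoly (foldSeq Z T) = ∑ j : Fin N, C (T j) * X ^ ((j : ℕ) % Z) := by
  unfold genPoly foldSeq
  simp only [map_sum, Finset.sum_mul]
  rw [Finset.sum_comm]
  refine Finset.sum_congr rfl fun j _ => ?_
  rw [Finset.sum_eq_single (⟨(j : ℕ) % Z, (Nat.mod_le _ _).trans_lt j.2⟩ : Fin N)]
  · simp
  · intro b _ hb
    rw [if_neg]
    · simp
    · intro h; exact hb (Fin.ext h.symm)
  · simp

open Polynomial in
lemma dvd_genPoly_sub {N : ℕ} (Z : ℕ) (T : Fin N → ZMod 2) :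
    (1 - X ^ Z) ∣ genPoly (foldSeq Z T) - genPoly T := by
  rw [genPoly_foldSeq]
  unfold genPoly
  rw [← Finset.sum_sub_distrib]
  refine Finset.dvd_sum fun j _ => ?_
  rw [← mul_sub]
  refine Dvd.dvd.mul_left ?_ _
  have h : (X ^ (j : ℕ) : (ZMod 2)[X]) = X ^ ((j : ℕ) % Z) * (X ^ Z) ^ ((j : ℕ) / Z) := by
    rw [← pow_mul, ← pow_add, Nat.mod_add_div]
  rw [h]
  have h2 : (1 - X ^ Z : (ZMod 2)[X]) ∣ 1 - (X ^ Z) ^ ((j : ℕ) / Z) := by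
    simpa using sub_dvd_pow_sub_pow (1 : (ZMod 2)[X]) (X ^ Z) ((j : ℕ) / Z)
  have h3 := h2.mul_left (X ^ ((j : ℕ) % Z))
  rwa [mul_sub, mul_one] at h3

lemma exists_of_foldSeq_ne {N : ℕ} (Z : ℕ) (T : Fin N → ZMod 2) (i : Fin N)
    (h : foldSeq Z T i ≠ 0) : ∃ j : Fin N, T j ≠ 0 ∧ (j : ℕ) % Z = i := by
  obtain ⟨j, _, hj⟩ := Finset.exists_ne_zero_of_sum_ne_zero h
  by_cases hm : (j : ℕ) % Z = i
  · rw [if_pos hm] at hj; exact ⟨j, hj, hm⟩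
  · rw [if_neg hm] at hj; exact absurd rfl hj

lemma wt_foldSeq_le {N : ℕ} (Z : ℕ) (T : Fin N → ZMod 2) : wt (foldSeq Z T) ≤ wt T := by
  unfold wt
  refine (Finset.card_le_card (t := (Finset.univ.filter (fun i => T i ≠ 0)).image
    (fun j : Fin N => (⟨(j : ℕ) % Z, (Nat.mod_le _ _).trans_lt j.2⟩ : Fin N))) ?_).trans
    Finset.card_image_le
  intro i hi
  obtain ⟨j, hj, hm⟩ := exists_of_foldSeq_ne Z T i (Finset.mem_filter.1 hi).2
  exact Finset.mem_image.2 ⟨j, by simpa using hj, Fin.ext hm⟩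

lemma wt_foldSeq_le' {N : ℕ} (Z : ℕ) (hZ : 0 < Z) (T : Fin N → ZMod 2) :
    wt (foldSeq Z T) ≤ Z := by
  unfold wt
  rw [← Finset.card_map Fin.valEmbedding]
  refine (Finset.card_le_card (t := Finset.range Z) ?_).trans (by simp)
  intro i hi
  obtain ⟨i, hi', rfl⟩ := Finset.mem_map.1 hi
  obtain ⟨j, hj, hm⟩ := exists_of_foldSeq_ne Z T i (Finset.mem_filter.1 hi').2
  exact Finset.mem_range.2 (hm.symm.trans_lt (Nat.mod_lt _ hZ))

lemma foldSeq_zone {N : ℕ} (Z : ℕ) (hZ : 0 < Z) (T : Fin N → ZMod 2) (i : Fin N)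
    (hi : Z ≤ (i : ℕ)) : foldSeq Z T i = 0 := by
  by_contra h
  obtain ⟨j, hj, hm⟩ := exists_of_foldSeq_ne Z T i h
  have := Nat.mod_lt (j : ℕ) hZ
  omega

lemma genPoly_add {N : ℕ} (S T : Fin N → ZMod 2) :
    genPoly (S + T) = genPoly S + genPoly T := by
  simp [genPoly, add_mul, Finset.sum_add_distrib]

/-- For any `2^n`-periodic binary sequence and `1 ≤ k ≤ 2^n`, with
`Z = 2^{⌈log₂(2^n - L_k(S))⌉}`, there exists `k' ≤ k` with `k' ≤ Z` and
`L_k(S) = L_{k'}(S) = L_{k';Z}(S)`. -/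
theorem stmt7 (n k : ℕ) (hk1 : 1 ≤ k) (hk : k ≤ 2^n) (S : Fin (2^n) → ZMod 2) :
    ∃ k' ≤ k, k' ≤ 2^(Nat.clog 2 (2^n - errLC S k)) ∧
      errLC S k = errLC S k' ∧
      errLC S k' = errLCZone S k' (2^(Nat.clog 2 (2^n - errLC S k))) := by
  obtain ⟨T, hT, hc⟩ : errLC S k ∈ {c | ∃ T : Fin (2^n) → ZMod 2, wt T ≤ k ∧ linComp (S + T) = c} :=
    Nat.sInf_mem ⟨_, 0, by simp [wt], rfl⟩
  have hcN : errLC S k ≤ 2^n := by rw [← hc]; exact Nat.sub_le _ _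
  have hdvd := dvd_of_linComp (S + T)
  rw [hc] at hdvd
  generalize hm : Nat.clog 2 (2^n - errLC S k) = m
  have hdZ : 2^n - errLC S k ≤ 2^m := by rw [← hm]; exact Nat.le_pow_clog (by norm_num) _
  have hZ : 0 < 2^m := by positivity
  have hk' : wt (foldSeq (2^m) T) ≤ k := (wt_foldSeq_le _ _).trans hT
  have hL : linComp (S + foldSeq (2^m) T) ≤ errLC S k := by
    have h1 := linComp_le_of_dvd (d := 2^n - errLC S k) (Nat.sub_le _ _)
      (S + foldSeq (2^m) T) ?_
    · omega
    · have h2 := dvd_genPoly_sub (2^m) T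
      rw [one_sub_pow2] at h2
      have h3 := dvd_add hdvd ((pow_dvd_pow _ hdZ).trans h2)
      rw [genPoly_add] at h3 ⊢
      convert h3 using 1
      ring
  have hA : errLC S k ≤ errLC S (wt (foldSeq (2^m) T)) := by
    refine le_csInf ⟨_, 0, by simp [wt], rfl⟩ ?_
    rintro c ⟨U, hU, rfl⟩
    exact Nat.sInf_le ⟨U, hU.trans hk', rfl⟩
  have hB : errLC S (wt (foldSeq (2^m) T)) ≤ errLCZone S (wt (foldSeq (2^m) T)) (2^m) := by
    refine le_csInf ⟨_, 0, by simp [wt], by simp, rfl⟩ ?_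
    rintro c ⟨U, hU, _, rfl⟩
    exact Nat.sInf_le ⟨U, hU, rfl⟩
  have hC : errLCZone S (wt (foldSeq (2^m) T)) (2^m) ≤ errLC S k := by
    refine le_trans ?_ hL
    exact Nat.sInf_le ⟨foldSeq (2^m) T, le_rfl, foldSeq_zone _ hZ T, rfl⟩
  exact ⟨_, hk', wt_foldSeq_le' _ hZ _, by omega, by omega⟩
end
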